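/- arXiv:2212.09296 — 2 statements merged into one kernel-verified Lean document; each statement's English description precedes it below -/
import Mathlib

section
/- Let X be a realcompact space. For every compactly supported Radon measure μ on X and every u ∈ C(X), u is |μ|-integrable; define φ_μ(u) := ∫_X u dμ. Then the map μ ↦ φ_μ is a linear bijection from M_c(X) onto the order dual C(X)~ (the space of order bounded linear functionals on C(X)), and both this map and its inverse are positive; in other words, it is a lattice isomorphism between M_c(X) and C(X)~. -/
open MeasureTheory Function Topology
open scoped ENNReal

/-- A topological space is *realcompact* if it is homeomorphic to a closed subspace of a
product of copies of `ℝ`. -/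
def Realcompact (Y : Type u) [TopologicalSpace Y] : Prop :=
  ∃ (ι : Type u) (s : Set (ι → ℝ)), IsClosed s ∧ Nonempty (Y ≃ₜ s)

/-- A signed Borel measure `μ` is a *Radon measure* if `|μ|(B)` is the supremum of
`|μ|(C)` over compact subsets `C ⊆ B`, for every Borel set `B`. -/
def IsRadon {X : Type u} [TopologicalSpace X] [MeasurableSpace X]
    (μ : SignedMeasure X) : Prop :=
  ∀ B : Set X, MeasurableSet B →
    μ.totalVariation B = ⨆ (C : Set X) (_ : C ⊆ B) (_ : IsCompact C), μ.totalVariation C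

/-- The support of a signed Borel measure. -/
def msupport {X : Type u} [TopologicalSpace X] [MeasurableSpace X]
    (μ : SignedMeasure X) : Set X :=
  {x | ∀ U : Set X, IsOpen U → x ∈ U → 0 < μ.totalVariation U}

/-- Membership in `M_c(X)`: a compactly supported Radon measure. -/
def McMem {X : Type u} [TopologicalSpace X] [MeasurableSpace X]
    (μ : SignedMeasure X) : Prop :=
  IsRadon μ ∧ IsCompact (msupport μ)

/-- The functional `φ_μ : u ↦ ∫_X u dμ`, the integral being taken with respect to the
Jordan decomposition `μ = μ⁺ − μ⁻`. -/
noncomputable def phiFun {X : Type u} [TopologicalSpace X] [MeasurableSpace X]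
    (μ : SignedMeasure X) : C(X, ℝ) → ℝ := fun u =>
  (∫ x, u x ∂μ.toJordanDecomposition.posPart) - ∫ x, u x ∂μ.toJordanDecomposition.negPart

/-- A linear functional on a preordered real vector space is *order bounded* if it maps
every order interval to a bounded set of reals. -/
def IsOrderBdd (E : Type v) [AddCommGroup E] [Module ℝ E] [Preorder E]
    (φ : E →ₗ[ℝ] ℝ) : Prop :=
  ∀ u v : E, ∃ M : ℝ, ∀ w : E, u ≤ w → w ≤ v → |φ w| ≤ M

section RRaux

open Set Filter

set_option linter.unusedSectionVars false

section signedPart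

variable {X : Type*} [MeasurableSpace X]

theorem RR_jordan_le (a b : Measure X) [IsFiniteMeasure a] [IsFiniteMeasure b] :
    (a.toSignedMeasure - b.toSignedMeasure).totalVariation ≤ a + b := by
  set s := a.toSignedMeasure - b.toSignedMeasure with hs
  obtain ⟨i, hi, h1, h2, hp, hn⟩ := s.toJordanDecomposition_spec
  have hpos : s.toJordanDecomposition.posPart ≤ a := by
    refine Measure.le_iff.2 fun E hE => ?_
    rw [hp, ← ENNReal.toReal_le_toReal (measure_ne_top _ _) (measure_ne_top _ _)]
    change Measure.real _ _ ≤ a.real E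
    rw [SignedMeasure.toMeasureOfZeroLE_real_apply _ _ _ hE, hs, sub_apply,
      Measure.toSignedMeasure_apply_measurable (hi.inter hE),
      Measure.toSignedMeasure_apply_measurable (hi.inter hE)]
    have : a.real (i ∩ E) ≤ a.real E := measureReal_mono inter_subset_right
    have h0 : 0 ≤ b.real (i ∩ E) := measureReal_nonneg
    linarith
  have hneg : s.toJordanDecomposition.negPart ≤ b := by
    refine Measure.le_iff.2 fun E hE => ?_
    rw [hn, ← ENNReal.toReal_le_toReal (measure_ne_top _ _) (measure_ne_top _ _)]
    change Measure.real _ _ ≤ b.real E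
    rw [SignedMeasure.toMeasureOfLEZero_real_apply _ _ _ hE, hs, sub_apply,
      Measure.toSignedMeasure_apply_measurable (hi.compl.inter hE),
      Measure.toSignedMeasure_apply_measurable (hi.compl.inter hE)]
    have : b.real (iᶜ ∩ E) ≤ b.real E := measureReal_mono inter_subset_right
    have h0 : 0 ≤ a.real (iᶜ ∩ E) := measureReal_nonneg
    linarith
  exact add_le_add hpos hneg

theorem RR_sub_jordan (μ : SignedMeasure X) :
    μ = μ.toJordanDecomposition.posPart.toSignedMeasure
      - μ.toJordanDecomposition.negPart.toSignedMeasure :=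
  μ.toSignedMeasure_toJordanDecomposition.symm

theorem RR_measure_eq (a b c d : Measure X) [IsFiniteMeasure a] [IsFiniteMeasure b]
    [IsFiniteMeasure c] [IsFiniteMeasure d]
    (h : a.toSignedMeasure - b.toSignedMeasure = c.toSignedMeasure - d.toSignedMeasure) :
    a + d = c + b := by
  have h1 : (a + d).toSignedMeasure = (c + b).toSignedMeasure := by
    rw [Measure.toSignedMeasure_add, Measure.toSignedMeasure_add]
    rw [sub_eq_sub_iff_add_eq_add] at h
    exact h
  exact Measure.toSignedMeasure_eq_toSignedMeasure_iff.1 h1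

theorem RR_phi [TopologicalSpace X] (a b : Measure X) [IsFiniteMeasure a] [IsFiniteMeasure b]
    (u : C(X, ℝ)) (ha : Integrable u a) (hb : Integrable u b) :
    phiFun (a.toSignedMeasure - b.toSignedMeasure) u = ∫ x, u x ∂a - ∫ x, u x ∂b := by
  set s := a.toSignedMeasure - b.toSignedMeasure with hs
  have h := RR_measure_eq _ _ _ _ (hs.symm.trans (RR_sub_jordan s))
  have hab : Integrable u s.totalVariation :=
    (ha.add_measure hb).mono_measure (RR_jordan_le a b)
  have hp : Integrable u s.toJordanDecomposition.posPart := hab.left_of_add_measure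
  have hn : Integrable u s.toJordanDecomposition.negPart := hab.right_of_add_measure
  have := congrArg (fun m => ∫ x, u x ∂m) h
  rw [integral_add_measure ha hn, integral_add_measure hp hb] at this
  unfold phiFun
  linarith

end signedPart

section topPart

variable {X : Type*} [TopologicalSpace X] [MeasurableSpace X] [BorelSpace X]

theorem RR_isRadon_iff (μ : SignedMeasure X) : IsRadon μ ↔ μ.totalVariation.InnerRegular := by
  constructor
  · intro h
    refine ⟨fun B hB r hr => ?_⟩
    rw [h B hB] at hr
    simpa only [lt_iSup_iff, exists_prop] using hr
  · intro h B hB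
    exact h.innerRegular.measure_eq_iSup hB

theorem RR_innerRegular_of_le [T2Space X] (a c : Measure X) [IsFiniteMeasure a] [IsFiniteMeasure c]
    [c.InnerRegular] (h : a ≤ c) : a.InnerRegular := by
  refine ⟨fun B hB r hr => ?_⟩
  obtain ⟨K, hKB, hK, hlt⟩ := hB.exists_isCompact_sdiff_lt (μ := c) (measure_ne_top _ _)
    (ε := a B - r) (tsub_pos_of_lt hr).ne'
  refine ⟨K, hKB, hK, ?_⟩
  have h1 : a (B \ K) < a B - r := (h _).trans_lt hlt
  rw [lt_tsub_iff_right] at h1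
  have h2 : a B ≤ a K + a (B \ K) := by
    calc a B = a (K ∪ B \ K) := by rw [union_sdiff_cancel hKB]
      _ ≤ _ := measure_union_le _ _
  by_contra hc
  push Not at hc
  have : a B ≤ a (B \ K) + r := h2.trans (by rw [add_comm]; gcongr)
  exact absurd h1 (not_lt.2 this)

theorem RR_null_of_local (m : Measure X) [m.InnerRegular] {V : Set X} (hV : IsOpen V)
    (h : ∀ x ∈ V, ∃ U, IsOpen U ∧ x ∈ U ∧ m U = 0) : m V = 0 := by
  by_contra h0
  obtain ⟨K, hKV, hK, hlt⟩ := hV.measurableSet.exists_lt_isCompact (μ := m)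
    (pos_iff_ne_zero.2 h0)
  refine hlt.ne' (hK.measure_zero_of_nhdsWithin fun x hx => ?_)
  obtain ⟨U, hU, hxU, hU0⟩ := h x (hKV hx)
  exact ⟨U, mem_nhdsWithin_of_mem_nhds (hU.mem_nhds hxU), hU0⟩

theorem RR_isClosed_msupport (μ : SignedMeasure X) : IsClosed (msupport μ) := by
  rw [← isOpen_compl_iff, isOpen_iff_forall_mem_open]
  intro x hx
  simp only [msupport, mem_compl_iff, mem_ofPred_eq, not_forall, not_lt, nonpos_iff_eq_zero] at hx
  obtain ⟨U, hU, hxU, h0⟩ := hx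
  refine ⟨U, fun y hy hy' => ?_, hU, hxU⟩
  exact (hy' U hU hy).ne' h0

theorem RR_compl_msupport (μ : SignedMeasure X) (h : IsRadon μ) :
    μ.totalVariation (msupport μ)ᶜ = 0 := by
  have := (RR_isRadon_iff μ).1 h
  refine RR_null_of_local _ (RR_isClosed_msupport μ).isOpen_compl fun x hx => ?_
  simp only [msupport, mem_compl_iff, mem_ofPred_eq, not_forall, not_lt, nonpos_iff_eq_zero] at hx
  obtain ⟨U, hU, hxU, h0⟩ := hx
  exact ⟨U, hU, hxU, h0⟩

theorem RR_integrable_of_compact (m : Measure X) [IsFiniteMeasure m] {K : Set X} (hK : IsCompact K)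
    (h : m Kᶜ = 0) (u : C(X, ℝ)) : Integrable u m := by
  obtain ⟨C, hC⟩ := hK.exists_bound_of_continuousOn u.continuous.continuousOn
  refine Integrable.of_bound u.continuous.measurable.aestronglyMeasurable C ?_
  have : ∀ᵐ x ∂m, x ∈ K := h
  filter_upwards [this] with x hx using hC x hx

theorem RR_integrable (μ : SignedMeasure X) (h : McMem μ) (u : C(X, ℝ)) :
    Integrable u μ.totalVariation :=
  RR_integrable_of_compact _ h.2 (RR_compl_msupport μ h.1) u

theorem RR_mcMem [T2Space X] (a b : Measure X) [IsFiniteMeasure a] [IsFiniteMeasure b]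
    [a.InnerRegular] [b.InnerRegular] {K : Set X} (hK : IsCompact K) (ha : a Kᶜ = 0)
    (hb : b Kᶜ = 0) : McMem (a.toSignedMeasure - b.toSignedMeasure) := by
  refine ⟨(RR_isRadon_iff _).2 (RR_innerRegular_of_le _ (a + b) (RR_jordan_le a b)), ?_⟩
  refine hK.of_isClosed_subset (RR_isClosed_msupport _) fun x hx => ?_
  by_contra hxK
  have h1 := hx Kᶜ hK.isClosed.isOpen_compl hxK
  have h2 := RR_jordan_le a b Kᶜ
  rw [Measure.add_apply, ha, hb, add_zero] at h2
  exact absurd h1 (not_lt.2 h2)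

theorem RR_parts [T2Space X] (μ : SignedMeasure X) (h : McMem μ) :
    μ.toJordanDecomposition.posPart.InnerRegular ∧ μ.toJordanDecomposition.negPart.InnerRegular ∧
    μ.toJordanDecomposition.posPart (msupport μ)ᶜ = 0 ∧
    μ.toJordanDecomposition.negPart (msupport μ)ᶜ = 0 ∧
    (∀ u : C(X, ℝ), Integrable u μ.toJordanDecomposition.posPart) ∧
    (∀ u : C(X, ℝ), Integrable u μ.toJordanDecomposition.negPart) := by
  have hr := (RR_isRadon_iff μ).1 h.1
  have hp : μ.toJordanDecomposition.posPart ≤ μ.totalVariation := Measure.le_add_right le_rfl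
  have hn : μ.toJordanDecomposition.negPart ≤ μ.totalVariation := Measure.le_add_left le_rfl
  have h0 := RR_compl_msupport μ h.1
  refine ⟨RR_innerRegular_of_le _ _ hp, RR_innerRegular_of_le _ _ hn,
    le_antisymm ((hp _).trans h0.le) zero_le, le_antisymm ((hn _).trans h0.le) zero_le,
    fun u => (RR_integrable μ h u).mono_measure hp, fun u => (RR_integrable μ h u).mono_measure hn⟩

theorem RR_neg_nonneg (μ : SignedMeasure X) (h : 0 ≤ μ) : μ.toJordanDecomposition.negPart = 0 := by
  obtain ⟨i, hi, h1, h2, hp, hn⟩ := μ.toJordanDecomposition_spec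
  ext E hE
  rw [hn]
  have := SignedMeasure.toMeasureOfLEZero_real_apply μ h2 hi.compl hE
  have h3 := h (iᶜ ∩ E) (hi.compl.inter hE)
  simp only [FunLike.coe_zero, Pi.zero_apply] at h3
  have h4 : (μ.toMeasureOfLEZero iᶜ hi.compl h2).real E = 0 :=
    le_antisymm (by linarith) measureReal_nonneg
  simpa using (measureReal_eq_zero_iff).1 h4

theorem RR_urysohn [T35Space X] {C D : Set X} (hC : IsCompact C) (hD : IsCompact D)
    (hCD : Disjoint C D) : ∃ u : C(X, ℝ), EqOn u 0 D ∧ EqOn u 1 C ∧ ∀ x, u x ∈ Icc (0 : ℝ) 1 := by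
  have hC' := hC.image (continuous_stoneCechUnit (α := X))
  have hD' := hD.image (continuous_stoneCechUnit (α := X))
  obtain ⟨f, h0, h1, h2⟩ := exists_continuous_zero_one_of_isClosed hD'.isClosed hC'.isClosed
    ((disjoint_image_iff injective_stoneCechUnit_of_t35Space).2 hCD.symm)
  exact ⟨f.comp ⟨stoneCechUnit, continuous_stoneCechUnit⟩, fun x hx => h0 (mem_image_of_mem _ hx),
    fun x hx => h1 (mem_image_of_mem _ hx), fun x => h2 _⟩

theorem RR_pos [T35Space X] (μ : SignedMeasure X) (h : McMem μ)
    (hpos : ∀ u : C(X, ℝ), 0 ≤ u → 0 ≤ phiFun μ u) : 0 ≤ μ := by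
  obtain ⟨hpr, hnr, hp0, hn0, hpi, hni⟩ := RR_parts μ h
  have hms := μ.toJordanDecomposition.mutuallySingular
  have hμ := RR_sub_jordan μ
  have hphi : ∀ u : C(X, ℝ), phiFun μ u = ∫ x, u x ∂μ.toJordanDecomposition.posPart
    - ∫ x, u x ∂μ.toJordanDecomposition.negPart := fun u => rfl
  set a := μ.toJordanDecomposition.posPart
  set b := μ.toJordanDecomposition.negPart
  obtain ⟨N, hN, haN, hbN⟩ := hms
  have hb : b = 0 := by
    rw [← Measure.measure_univ_eq_zero]
    have hbu : b.real univ = b.real N := by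
      have : b.real Nᶜ = 0 := by simp [measureReal_def, hbN]
      rw [← measureReal_add_measureReal_compl hN, this, add_zero]
    have key : ∀ ε > (0 : ℝ), b.real univ ≤ 0 + ε := by
      intro ε hε
      have hε2 : ENNReal.ofReal (ε / 2) ≠ 0 := by simpa using hε
      obtain ⟨C, hCN, hC, hCl⟩ := hN.exists_isCompact_sdiff_lt (μ := b) (measure_ne_top _ _) hε2
      obtain ⟨D, hDN, hD, hDl⟩ := hN.compl.exists_isCompact_sdiff_lt (μ := a) (measure_ne_top _ _)
        hε2
      obtain ⟨u, hu0, hu1, hu⟩ := RR_urysohn hC hD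
        (disjoint_left.2 fun x hx hx' => hDN hx' (hCN hx))
      have h1 := hpos u (fun x => (hu x).1)
      rw [hphi] at h1
      have hCl' : b.real (N \ C) < ε / 2 := by
        rw [measureReal_def, ← ENNReal.toReal_ofReal (by linarith : 0 ≤ ε / 2)]
        exact (ENNReal.toReal_lt_toReal (measure_ne_top _ _) ENNReal.ofReal_ne_top).2 hCl
      have hDl' : a.real (Nᶜ \ D) < ε / 2 := by
        rw [measureReal_def, ← ENNReal.toReal_ofReal (by linarith : 0 ≤ ε / 2)]
        exact (ENNReal.toReal_lt_toReal (measure_ne_top _ _) ENNReal.ofReal_ne_top).2 hDl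
      have h2 : b.real C ≤ ∫ x, u x ∂b := by
        rw [← integral_indicator_one hC.measurableSet]
        refine integral_mono ((integrable_const 1).indicator hC.measurableSet) (hni u) fun x => ?_
        by_cases hx : x ∈ C
        · have := hu1 hx
          simp only [Pi.one_apply] at this
          simp [hx, this]
        · simpa [hx] using (hu x).1
      have h3 : ∫ x, u x ∂a ≤ a.real Dᶜ := by
        rw [← integral_indicator_one hD.measurableSet.compl]
        refine integral_mono (hpi u) ((integrable_const 1).indicator hD.measurableSet.compl)
          fun x => ?_
        by_cases hx : x ∈ D
        · have := hu0 hx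
          simp only [Pi.zero_apply] at this
          simp [hx, this]
        · simpa [hx] using (hu x).2
      have h4 : a.real Dᶜ ≤ a.real (Nᶜ \ D) := by
        calc a.real Dᶜ ≤ a.real (N ∪ Nᶜ \ D) := measureReal_mono (fun x hx => by
              by_cases hxN : x ∈ N
              · exact Or.inl hxN
              · exact Or.inr ⟨hxN, hx⟩)
          _ ≤ a.real N + a.real (Nᶜ \ D) := measureReal_union_le _ _
          _ = _ := by simp [measureReal_def, haN]
      have h5 : b.real N ≤ b.real C + b.real (N \ C) := by
        calc b.real N = b.real (C ∪ N \ C) := by rw [union_sdiff_cancel hCN]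
          _ ≤ _ := measureReal_union_le _ _
      linarith
    have := le_of_forall_pos_le_add key
    exact (measureReal_eq_zero_iff).1 (le_antisymm this measureReal_nonneg)
  intro E hE
  rw [hμ]
  have hbE : b.real E = 0 := by simp [hb]
  change μ.toJordanDecomposition.negPart.real E = 0 at hbE
  simp [hbE, Measure.toSignedMeasure_apply_measurable hE]

theorem RR_add [T2Space X] (μ ν : SignedMeasure X) (hμ : McMem μ) (hν : McMem ν) (u : C(X, ℝ)) :
    phiFun (μ + ν) u = phiFun μ u + phiFun ν u := by
  obtain ⟨hpr, hnr, hp0, hn0, hpi, hni⟩ := RR_parts μ hμ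
  obtain ⟨hpr', hnr', hp0', hn0', hpi', hni'⟩ := RR_parts ν hν
  have : μ + ν = (μ.toJordanDecomposition.posPart + ν.toJordanDecomposition.posPart).toSignedMeasure
     - (μ.toJordanDecomposition.negPart + ν.toJordanDecomposition.negPart).toSignedMeasure := by
    rw [Measure.toSignedMeasure_add, Measure.toSignedMeasure_add]
    conv_lhs => rw [RR_sub_jordan μ, RR_sub_jordan ν]
    abel
  rw [this, RR_phi _ _ _ ((hpi u).add_measure (hpi' u)) ((hni u).add_measure (hni' u)),
    integral_add_measure (hpi u) (hpi' u), integral_add_measure (hni u) (hni' u)]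
  unfold phiFun
  ring

theorem RR_smul (c : ℝ) (μ : SignedMeasure X) (u : C(X, ℝ)) :
    phiFun (c • μ) u = c * phiFun μ u := by
  unfold phiFun
  rw [SignedMeasure.toJordanDecomposition_smul_real]
  rcases le_or_gt 0 c with hc | hc
  · rw [JordanDecomposition.real_smul_posPart_nonneg _ _ hc,
      JordanDecomposition.real_smul_negPart_nonneg _ _ hc, integral_smul_nnreal_measure,
      integral_smul_nnreal_measure]
    simp only [NNReal.smul_def, Real.coe_toNNReal _ hc, smul_eq_mul]
    ring
  · rw [JordanDecomposition.real_smul_posPart_neg _ _ hc,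
      JordanDecomposition.real_smul_negPart_neg _ _ hc, integral_smul_nnreal_measure,
      integral_smul_nnreal_measure]
    simp only [NNReal.smul_def, Real.coe_toNNReal _ (by linarith : 0 ≤ -c), smul_eq_mul]
    ring

theorem RR_sub_mem [T2Space X] (μ ν : SignedMeasure X) (hμ : McMem μ) (hν : McMem ν) :
    McMem (μ - ν) := by
  obtain ⟨hpr, hnr, hp0, hn0, hpi, hni⟩ := RR_parts μ hμ
  obtain ⟨hpr', hnr', hp0', hn0', hpi', hni'⟩ := RR_parts ν hν
  have : μ - ν = (μ.toJordanDecomposition.posPart + ν.toJordanDecomposition.negPart).toSignedMeasure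
     - (μ.toJordanDecomposition.negPart + ν.toJordanDecomposition.posPart).toSignedMeasure := by
    rw [Measure.toSignedMeasure_add, Measure.toSignedMeasure_add]
    conv_lhs => rw [RR_sub_jordan μ, RR_sub_jordan ν]
    abel
  rw [this]
  have hz : ∀ m : Measure X, ∀ K L : Set X, m Kᶜ = 0 → m (K ∪ L)ᶜ = 0 := fun m K L h =>
    measure_mono_null (compl_subset_compl.2 subset_union_left) h
  have hz' : ∀ m : Measure X, ∀ K L : Set X, m Lᶜ = 0 → m (K ∪ L)ᶜ = 0 := fun m K L h =>
    measure_mono_null (compl_subset_compl.2 subset_union_right) h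
  refine RR_mcMem _ _ (hμ.2.union hν.2) ?_ ?_
  · rw [Measure.add_apply, hz _ _ _ hp0, hz' _ _ _ hn0', add_zero]
  · rw [Measure.add_apply, hz _ _ _ hn0, hz' _ _ _ hp0', add_zero]

theorem RR_phi_sub [T2Space X] (μ ν : SignedMeasure X) (hμ : McMem μ) (hν : McMem ν) (u : C(X, ℝ)) :
    phiFun (μ - ν) u = phiFun μ u - phiFun ν u := by
  have := RR_add (μ - ν) ν (RR_sub_mem μ ν hμ hν) hν u
  rw [sub_add_cancel] at this
  linarith

theorem RR_inj [T35Space X] (μ ν : SignedMeasure X) (hμ : McMem μ) (hν : McMem ν)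
    (h : phiFun μ = phiFun ν) : μ = ν := by
  refine le_antisymm ?_ ?_
  · have := RR_pos (ν - μ) (RR_sub_mem _ _ hν hμ) (fun u _ => by rw [RR_phi_sub _ _ hν hμ, h]; simp)
    intro E hE
    have := this E hE
    simpa using this
  · have := RR_pos (μ - ν) (RR_sub_mem _ _ hμ hν) (fun u _ => by rw [RR_phi_sub _ _ hμ hν, h]; simp)
    intro E hE
    have := this E hE
    simpa using this

theorem RR_phi_linear [T2Space X] (μ : SignedMeasure X) (h : McMem μ) :
    ∃ φ : C(X, ℝ) →ₗ[ℝ] ℝ, ⇑φ = phiFun μ ∧ IsOrderBdd C(X, ℝ) φ := by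
  obtain ⟨hpr, hnr, hp0, hn0, hpi, hni⟩ := RR_parts μ h
  refine ⟨{ toFun := phiFun μ, map_add' := ?_, map_smul' := ?_ }, rfl, ?_⟩
  · intro u v
    simp only [phiFun, ContinuousMap.add_apply]
    rw [integral_add (hpi u) (hpi v), integral_add (hni u) (hni v)]
    ring
  · intro c u
    simp only [phiFun, ContinuousMap.smul_apply, RingHom.id_apply, integral_const_mul, smul_eq_mul]
    ring
  · intro u v
    refine ⟨∫ x, (|u| + |v|) x ∂μ.toJordanDecomposition.posPart
      + ∫ x, (|u| + |v|) x ∂μ.toJordanDecomposition.negPart, fun w hu hv => ?_⟩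
    have hw : ∀ x, |w x| ≤ (|u| + |v|) x := fun x => by
      have h1 : u x ≤ w x := hu x
      have h2 : w x ≤ v x := hv x
      simp only [ContinuousMap.add_apply, ContinuousMap.abs_apply]
      rw [abs_le]
      have := neg_abs_le (u x)
      have := le_abs_self (v x)
      have := abs_nonneg (u x)
      have := abs_nonneg (v x)
      constructor <;> linarith
    have e1 : |∫ x, w x ∂μ.toJordanDecomposition.posPart| ≤
        ∫ x, (|u| + |v|) x ∂μ.toJordanDecomposition.posPart :=
      (abs_integral_le_integral_abs).trans (integral_mono (hpi w).abs (hpi _) hw)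
    have e2 : |∫ x, w x ∂μ.toJordanDecomposition.negPart| ≤
        ∫ x, (|u| + |v|) x ∂μ.toJordanDecomposition.negPart :=
      (abs_integral_le_integral_abs).trans (integral_mono (hni w).abs (hni _) hw)
    exact (abs_sub _ _).trans (add_le_add e1 e2)

end topPart

section decomposition

variable {X : Type*} [TopologicalSpace X]

/-- The positive part of an order bounded functional, on nonnegative functions. -/
noncomputable def RRP (φ : C(X, ℝ) →ₗ[ℝ] ℝ) (u : C(X, ℝ)) : ℝ :=
  sSup (φ '' Icc 0 u)

theorem RRP_bdd {φ : C(X, ℝ) →ₗ[ℝ] ℝ} (h : IsOrderBdd C(X, ℝ) φ) (u : C(X, ℝ)) :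
    BddAbove (φ '' Icc 0 u) := by
  obtain ⟨M, hM⟩ := h 0 u
  refine ⟨M, ?_⟩
  rintro _ ⟨w, hw, rfl⟩
  exact (le_abs_self _).trans (hM w hw.1 hw.2)

theorem RRP_le {φ : C(X, ℝ) →ₗ[ℝ] ℝ} (h : IsOrderBdd C(X, ℝ) φ) {u w : C(X, ℝ)} (h0 : 0 ≤ w)
    (h1 : w ≤ u) : φ w ≤ RRP φ u :=
  le_csSup (RRP_bdd h u) (mem_image_of_mem _ ⟨h0, h1⟩)

theorem RRP_ub {φ : C(X, ℝ) →ₗ[ℝ] ℝ} {u : C(X, ℝ)} (hu : 0 ≤ u) {M : ℝ}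
    (h : ∀ w, 0 ≤ w → w ≤ u → φ w ≤ M) : RRP φ u ≤ M := by
  refine csSup_le ⟨_, mem_image_of_mem _ (left_mem_Icc.2 hu)⟩ ?_
  rintro _ ⟨w, hw, rfl⟩
  exact h w hw.1 hw.2

theorem RRP_nonneg {φ : C(X, ℝ) →ₗ[ℝ] ℝ} (h : IsOrderBdd C(X, ℝ) φ) {u : C(X, ℝ)} (hu : 0 ≤ u) :
    0 ≤ RRP φ u := by
  have := RRP_le h le_rfl hu
  rwa [map_zero] at this

theorem RRP_add {φ : C(X, ℝ) →ₗ[ℝ] ℝ} (h : IsOrderBdd C(X, ℝ) φ) {u v : C(X, ℝ)} (hu : 0 ≤ u)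
    (hv : 0 ≤ v) : RRP φ (u + v) = RRP φ u + RRP φ v := by
  apply le_antisymm
  · refine RRP_ub (add_nonneg hu hv) fun w h0 h1 => ?_
    have e : φ w = φ (w ⊓ u) + φ (w - w ⊓ u) := by rw [← map_add]; congr 1; abel
    rw [e]
    refine add_le_add (RRP_le h (le_inf h0 hu) inf_le_right)
      (RRP_le h (sub_nonneg.2 inf_le_left) ?_)
    intro x
    have h1x : w x ≤ u x + v x := h1 x
    have hvx : 0 ≤ v x := hv x
    change w x - min (w x) (u x) ≤ v x
    rcases le_total (w x) (u x) with h | h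
    · rw [min_eq_left h]; linarith
    · rw [min_eq_right h]; linarith
  · have key : ∀ w, 0 ≤ w → w ≤ v → RRP φ u ≤ RRP φ (u + v) - φ w := fun w h0 h1 =>
      RRP_ub hu fun z hz0 hz1 => by
        have := RRP_le h (add_nonneg hz0 h0) (add_le_add hz1 h1)
        rw [map_add] at this
        linarith
    have : RRP φ v ≤ RRP φ (u + v) - RRP φ u := RRP_ub hv fun w h0 h1 => by
      have := key w h0 h1
      linarith
    linarith

theorem RRP_smul_le {φ : C(X, ℝ) →ₗ[ℝ] ℝ} (h : IsOrderBdd C(X, ℝ) φ) {u : C(X, ℝ)} (hu : 0 ≤ u)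
    {c : ℝ} (hc : 0 < c) : c * RRP φ u ≤ RRP φ (c • u) := by
  rw [← le_div_iff₀' hc]
  refine RRP_ub hu fun w h0 h1 => ?_
  rw [le_div_iff₀' hc]
  have := RRP_le h (smul_nonneg hc.le h0) (smul_le_smul_of_nonneg_left h1 hc.le)
  rwa [map_smul, smul_eq_mul] at this

theorem RRP_smul {φ : C(X, ℝ) →ₗ[ℝ] ℝ} (h : IsOrderBdd C(X, ℝ) φ) {u : C(X, ℝ)} (hu : 0 ≤ u)
    {c : ℝ} (hc : 0 < c) : RRP φ (c • u) = c * RRP φ u := by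
  refine le_antisymm ?_ (RRP_smul_le h hu hc)
  have := RRP_smul_le h (smul_nonneg hc.le hu) (inv_pos.2 hc)
  rw [smul_smul, inv_mul_cancel₀ hc.ne', one_smul] at this
  rwa [inv_mul_le_iff₀ hc] at this

theorem RRP_diff {φ : C(X, ℝ) →ₗ[ℝ] ℝ} (h : IsOrderBdd C(X, ℝ) φ) {a b c d : C(X, ℝ)}
    (ha : 0 ≤ a) (hb : 0 ≤ b) (hc : 0 ≤ c) (hd : 0 ≤ d) (e : a - b = c - d) :
    RRP φ a - RRP φ b = RRP φ c - RRP φ d := by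
  rw [sub_eq_sub_iff_add_eq_add] at e
  have := RRP_add h ha hd
  rw [e, RRP_add h hc hb] at this
  linarith

/-- Riesz-Kantorovich: an order bounded functional is a difference of positive ones. -/
theorem RR_decomp (φ : C(X, ℝ) →ₗ[ℝ] ℝ) (h : IsOrderBdd C(X, ℝ) φ) :
    ∃ ψ₁ ψ₂ : C(X, ℝ) →ₗ[ℝ] ℝ, (∀ u, 0 ≤ u → 0 ≤ ψ₁ u) ∧ (∀ u, 0 ≤ u → 0 ≤ ψ₂ u) ∧
      φ = ψ₁ - ψ₂ := by
  have hp : ∀ u : C(X, ℝ), 0 ≤ u ⊔ 0 := fun u => le_sup_right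
  have hd : ∀ u : C(X, ℝ), u = (u ⊔ 0) - ((-u) ⊔ 0) := fun u => by
    ext x
    change u x = max (u x) 0 - max (-u x) 0
    rcases le_total (u x) 0 with h | h
    · rw [max_eq_right h, max_eq_left (by linarith)]; ring
    · rw [max_eq_left h, max_eq_right (by linarith)]; ring
  have hval : ∀ a b : C(X, ℝ), 0 ≤ a → 0 ≤ b →
      RRP φ ((a - b) ⊔ 0) - RRP φ ((-(a - b)) ⊔ 0) = RRP φ a - RRP φ b := fun a b ha hb =>
    RRP_diff h (hp _) (hp _) ha hb (hd _).symm
  let ψ : C(X, ℝ) →ₗ[ℝ] ℝ :=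
    { toFun := fun u => RRP φ (u ⊔ 0) - RRP φ ((-u) ⊔ 0)
      map_add' := by
        intro u v
        have e : u + v = ((u ⊔ 0) + (v ⊔ 0)) - (((-u) ⊔ 0) + ((-v) ⊔ 0)) := by
          conv_lhs => rw [hd u, hd v]
          abel
        rw [e, hval _ _ (add_nonneg (hp _) (hp _)) (add_nonneg (hp _) (hp _)),
          RRP_add h (hp _) (hp _), RRP_add h (hp _) (hp _)]
        ring
      map_smul' := by
        intro c u
        simp only [RingHom.id_apply, smul_eq_mul]
        rcases lt_trichotomy c 0 with hc | hc | hc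
        · have e : c • u = (-c) • ((-u) ⊔ 0) - (-c) • (u ⊔ 0) := by
            conv_lhs => rw [hd u]
            rw [neg_smul, neg_smul, smul_sub]; abel
          have hc' : 0 < -c := by linarith
          rw [e, hval _ _ (smul_nonneg hc'.le (hp _)) (smul_nonneg hc'.le (hp _)),
            RRP_smul h (hp _) hc', RRP_smul h (hp _) hc']
          ring
        · subst hc
          simp
        · have e : c • u = c • (u ⊔ 0) - c • ((-u) ⊔ 0) := by
            conv_lhs => rw [hd u]
            rw [smul_sub]
          rw [e, hval _ _ (smul_nonneg hc.le (hp _)) (smul_nonneg hc.le (hp _)),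
            RRP_smul h (hp _) hc, RRP_smul h (hp _) hc]
          ring }
  have hψ : ∀ u, 0 ≤ u → ψ u = RRP φ u := fun u hu => by
    have := hval u 0 hu le_rfl
    have h0 : RRP φ (0 : C(X, ℝ)) = 0 := by
      have := RRP_add h (le_refl (0 : C(X, ℝ))) le_rfl
      rw [add_zero] at this
      linarith
    rw [sub_zero, h0, sub_zero] at this
    exact this
  refine ⟨ψ, ψ - φ, fun u hu => (hψ u hu).symm ▸ RRP_nonneg h hu, fun u hu => ?_, by simp⟩
  rw [LinearMap.sub_apply, hψ u hu]
  exact sub_nonneg.2 (RRP_le h hu le_rfl)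

end decomposition

section existence

variable {X : Type*} [TopologicalSpace X]

theorem RR_cutoff (ψ : C(X, ℝ) →ₗ[ℝ] ℝ) (hψ : ∀ u, 0 ≤ u → 0 ≤ ψ u) (f : C(X, ℝ)) :
    ∃ n : ℕ, ∀ u : C(X, ℝ), 0 ≤ u → (∀ x, f x ≤ n → u x = 0) → ψ u = 0 := by
  by_contra hc
  push Not at hc
  choose u hu0 hu hu1 using hc
  have hpos : ∀ n, 0 < ψ (u n) := fun n => lt_of_le_of_ne (hψ _ (hu0 n)) (hu1 n).symm
  let v : ℕ → C(X, ℝ) := fun n => (ψ (u n))⁻¹ • u n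
  have hv1 : ∀ n, ψ (v n) = 1 := fun n => by
    simp only [v, map_smul, smul_eq_mul]
    exact inv_mul_cancel₀ (hu1 n)
  have hv0 : ∀ n x, 0 ≤ v n x := fun n x => mul_nonneg (inv_nonneg.2 (hpos n).le) (hu0 n x)
  have hvz : ∀ (n : ℕ) x, f x ≤ n → v n x = 0 := fun n x h => by simp [v, hu n x h]
  have hlf : LocallyFinite fun n => support (v n) := by
    intro x
    refine ⟨{y | f y < f x + 1}, (isOpen_lt f.continuous continuous_const).mem_nhds (by simp), ?_⟩
    refine (finite_le_nat ⌈f x + 1⌉₊).subset ?_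
    rintro n ⟨y, hy, hy'⟩
    by_contra hn
    simp only [mem_ofPred_eq, not_le] at hn hy'
    refine hy (hvz n y ?_)
    have h1 := Nat.le_ceil (f x + 1)
    have h2 : ((⌈f x + 1⌉₊ : ℕ) : ℝ) < n := by exact_mod_cast hn
    linarith
  let S : C(X, ℝ) := ⟨fun x => ∑ᶠ n, v n x, continuous_finsum (fun n => (v n).continuous) hlf⟩
  have hS : ∀ N : ℕ, (N : ℝ) ≤ ψ S := by
    intro N
    have hle : 0 ≤ S - ∑ n ∈ Finset.range N, v n := by
      rw [sub_nonneg]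
      intro x
      change (∑ n ∈ Finset.range N, v n) x ≤ ∑ᶠ n, v n x
      have hfin : (support fun n => v n x).Finite := hlf.point_finite x
      rw [finsum_eq_sum_of_support_subset (s := hfin.toFinset ∪ Finset.range N) _ (by
        intro n hn; simp only [Finset.coe_union, Finite.coe_toFinset]; exact Or.inl hn)]
      rw [ContinuousMap.sum_apply]
      exact Finset.sum_le_sum_of_subset_of_nonneg Finset.subset_union_right fun n _ _ => hv0 n x
    have := hψ _ hle
    rw [map_sub, map_sum, Finset.sum_congr rfl (fun n _ => hv1 n)] at this
    simp at this
    linarith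
  obtain ⟨N, hN⟩ := exists_nat_gt (ψ S)
  exact absurd (hS N) (not_le.2 hN)

theorem RR_outer {X : Type u} [TopologicalSpace X] (hX : Realcompact X) (p : StoneCech X)
    (hp : p ∉ range (stoneCechUnit : X → StoneCech X)) :
    ∃ f : C(X, ℝ), stoneCechExtend (continuous_coe_real_ereal.comp f.continuous) p = ⊤ := by
  by_contra hc
  push Not at hc
  obtain ⟨ι, s, hs, ⟨e⟩⟩ := hX
  let F := comap (stoneCechUnit : X → StoneCech X) (𝓝 p)
  have hF : F.NeBot := by
    rw [comap_neBot_iff_frequently]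
    exact mem_closure_iff_frequently.1 (denseRange_stoneCechUnit p)
  have hlim : ∀ f : C(X, ℝ), Tendsto (fun x => (f x : EReal)) F
      (𝓝 (stoneCechExtend (continuous_coe_real_ereal.comp f.continuous) p)) := by
    intro f
    have h1 := ((continuous_stoneCechExtend
      (continuous_coe_real_ereal.comp f.continuous)).tendsto p).comp
      (tendsto_comap (f := (stoneCechUnit : X → StoneCech X)))
    refine h1.congr fun x => ?_
    exact stoneCechExtend_stoneCechUnit _ x
  have hreal : ∀ f : C(X, ℝ), ∃ r : ℝ, Tendsto f F (𝓝 r) := by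
    intro f
    have h1 := hlim f
    have h2 := hlim (-f)
    have h3 : Tendsto (fun x => ((-f) x : EReal)) F
      (𝓝 (-(stoneCechExtend (continuous_coe_real_ereal.comp f.continuous) p))) := by
      refine ((continuous_neg.tendsto _).comp h1).congr fun x => ?_
      simp
    have h4 := tendsto_nhds_unique h2 h3
    have h5 := hc f
    have h6 := hc (-f)
    rw [h4] at h6
    generalize stoneCechExtend (continuous_coe_real_ereal.comp f.continuous) p = L at *
    induction L with
    | bot => simp at h6
    | top => simp at h5
    | coe r => exact ⟨r, EReal.tendsto_coe.1 h1⟩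
  choose r hr using fun i : ι => hreal
    ⟨fun x => (e x : ι → ℝ) i, (continuous_apply i).comp (continuous_subtype_val.comp e.continuous)⟩
  have h1 : Tendsto (fun x => (e x : ι → ℝ)) F (𝓝 r) := tendsto_pi_nhds.2 hr
  have h2 : r ∈ s := hs.mem_of_tendsto h1 (Eventually.of_forall fun x => (e x).2)
  have h3 : Tendsto e F (𝓝 ⟨r, h2⟩) := tendsto_subtype_rng.2 h1
  have h4 : Tendsto (fun x => x) F (𝓝 (e.symm ⟨r, h2⟩)) :=
    ((e.symm.continuous.tendsto _).comp h3).congr fun x => e.symm_apply_apply x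
  have h5 := (continuous_stoneCechUnit.tendsto _).comp h4
  have h6 := tendsto_nhds_unique h5 tendsto_comap
  exact hp ⟨_, h6⟩

theorem RR_exists_pos {X : Type u} [TopologicalSpace X] [MeasurableSpace X] [BorelSpace X]
    [T35Space X] (hX : Realcompact X) (ψ : C(X, ℝ) →ₗ[ℝ] ℝ) (hψ : ∀ u, 0 ≤ u → 0 ≤ ψ u) :
    ∃ (a : Measure X) (K : Set X), IsFiniteMeasure a ∧ a.InnerRegular ∧ IsCompact K ∧ a Kᶜ = 0 ∧
      ∀ u : C(X, ℝ), ψ u = ∫ x, u x ∂a := by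
  let _ : MeasurableSpace (StoneCech X) := borel _
  have : BorelSpace (StoneCech X) := ⟨rfl⟩
  let j : C(X, StoneCech X) := ⟨stoneCechUnit, continuous_stoneCechUnit⟩
  let Λ : CompactlySupportedContinuousMap (StoneCech X) ℝ →ₚ[ℝ] ℝ :=
    { toFun := fun g => ψ (g.toContinuousMap.comp j)
      map_add' := fun g g' => by rw [← map_add]; rfl
      map_smul' := fun c g => by
        have := map_smul ψ c (g.toContinuousMap.comp j)
        exact this
      monotone' := fun g g' h => by
        rw [← sub_nonneg, ← map_sub]
        refine hψ _ fun x => ?_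
        exact sub_nonneg.2 (h (j x)) }
  let m := RealRMK.rieszMeasure Λ
  have hmreg : m.Regular := RealRMK.regular_rieszMeasure Λ
  have hmfin : IsFiniteMeasure m := inferInstanceAs (IsFiniteMeasure (RealRMK.rieszMeasure Λ))
  have hmin : m.InnerRegular := inferInstance
  -- points outside X have null neighbourhoods
  have hout : ∀ p ∉ range (stoneCechUnit : X → StoneCech X),
      ∃ U, IsOpen U ∧ p ∈ U ∧ m U = 0 := by
    intro p hp
    obtain ⟨f, hf⟩ := RR_outer hX p hp
    obtain ⟨n, hn⟩ := RR_cutoff ψ hψ f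
    have hcont := continuous_stoneCechExtend (continuous_coe_real_ereal.comp f.continuous)
    have hext := stoneCechExtend_stoneCechUnit (continuous_coe_real_ereal.comp f.continuous)
    set F := stoneCechExtend (continuous_coe_real_ereal.comp f.continuous)
    have hUo : IsOpen {q | (((n : ℝ) : ℝ) : EReal) < F q} := isOpen_lt continuous_const hcont
    refine ⟨{q | (((n : ℝ) : ℝ) : EReal) < F q}, hUo, ?_, ?_⟩
    · simp only [mem_ofPred_eq, hf]
      exact EReal.coe_lt_top _
    · by_contra h0
      obtain ⟨K, hKU, hK, hlt⟩ := hUo.measurableSet.exists_lt_isCompact (μ := m)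
        (pos_iff_ne_zero.2 h0)
      obtain ⟨g, hg0, hg1, hg⟩ := exists_continuous_zero_one_of_isClosed hUo.isClosed_compl
        hK.isClosed (disjoint_left.2 fun x hx hx' => hx (hKU hx'))
      let g' : CompactlySupportedContinuousMap (StoneCech X) ℝ :=
        ⟨g, HasCompactSupport.of_compactSpace _⟩
      have h1 := RealRMK.rieszMeasure_le_of_eq_one Λ (f := g') (fun x => (hg x).1) hK
        (fun x hx => hg1 hx)
      have h2 : Λ g' = 0 := by
        refine hn _ (fun x => (hg _).1) fun x hx => ?_
        refine hg0 ?_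
        simp only [mem_compl_iff, mem_ofPred_eq, not_lt]
        change F (stoneCechUnit x) ≤ _
        rw [hext]
        exact EReal.coe_le_coe_iff.2 hx
      rw [h2, ENNReal.ofReal_zero] at h1
      exact absurd hlt (not_lt.2 h1)
  let T : Set (StoneCech X) := {p | ∀ U, IsOpen U → p ∈ U → m U ≠ 0}
  have hTc : ∀ p ∈ Tᶜ, ∃ U, IsOpen U ∧ p ∈ U ∧ m U = 0 := by
    intro p hp
    simp only [T, mem_compl_iff, mem_ofPred_eq, not_forall, not_not] at hp
    obtain ⟨U, hU, hpU, h0⟩ := hp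
    exact ⟨U, hU, hpU, h0⟩
  have hTcl : IsClosed T := by
    rw [← isOpen_compl_iff, isOpen_iff_forall_mem_open]
    intro p hp
    obtain ⟨U, hU, hpU, h0⟩ := hTc p hp
    exact ⟨U, fun y hy hy' => hy' U hU hy h0, hU, hpU⟩
  have hT0 : m Tᶜ = 0 := RR_null_of_local m hTcl.isOpen_compl hTc
  have hTr : ∀ t : T, ∃ x : X, stoneCechUnit x = (t : StoneCech X) := by
    intro t
    by_contra h
    obtain ⟨U, hU, hpU, h0⟩ := hout t h
    exact t.2 U hU hpU h0
  choose κ hκ using hTr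
  have hκc : Continuous κ := by
    rw [(isEmbedding_stoneCechUnit (X := X)).isInducing.continuous_iff]
    exact continuous_subtype_val.congr fun t => (hκ t).symm
  have : CompactSpace T := isCompact_iff_compactSpace.1 hTcl.isCompact
  let m' : Measure T := m.comap Subtype.val
  have hemb : MeasurableEmbedding (Subtype.val : T → StoneCech X) :=
    MeasurableEmbedding.subtype_coe hTcl.measurableSet
  have hm'fin : IsFiniteMeasure m' := ⟨by
    rw [hemb.comap_apply]; exact measure_lt_top _ _⟩
  have hm'reg : m'.InnerRegular := by
    refine ⟨fun B hB r hr => ?_⟩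
    simp only [m'] at hr
    rw [hemb.comap_apply] at hr
    obtain ⟨C, hCB, hC, hlt⟩ := (hemb.measurableSet_image.2 hB).exists_lt_isCompact (μ := m) hr
    refine ⟨Subtype.val ⁻¹' C, ?_, (hC.isClosed.preimage continuous_subtype_val).isCompact, ?_⟩
    · intro t ht
      obtain ⟨t', ht', e⟩ := hCB ht
      rwa [Subtype.ext e] at ht'
    · simp only [m']
      rw [hemb.comap_apply, image_preimage_eq_of_subset]
      · exact hlt
      · exact hCB.trans (image_subset_range _ _)
  have hbdd : ∀ g : C(StoneCech X, ℝ), ψ (g.comp j) = ∫ x, g (j x) ∂(Measure.map κ m') := by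
    intro g
    let g' : CompactlySupportedContinuousMap (StoneCech X) ℝ :=
      ⟨g, HasCompactSupport.of_compactSpace _⟩
    have h1 : ∫ y, g y ∂m = ψ (g.comp j) := RealRMK.integral_rieszMeasure Λ g'
    rw [← h1, integral_map (f := fun x => g (j x)) hκc.measurable.aemeasurable
      (g.continuous.comp j.continuous).measurable.aestronglyMeasurable]
    have h2 : ∀ t : T, g (j (κ t)) = g t := fun t => congrArg g (hκ t)
    simp only [h2]
    rw [integral_subtype_comap hTcl.measurableSet (fun y => g y)]
    rw [Measure.restrict_eq_self_of_ae_mem]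
    exact hT0
  have hK : IsCompact (range κ) := isCompact_range hκc
  have hK0 : Measure.map κ m' (range κ)ᶜ = 0 := by
    rw [Measure.map_apply hκc.measurable hK.measurableSet.compl]
    have : κ ⁻¹' (range κ)ᶜ = ∅ := by ext t; simp
    rw [this, measure_empty]
  refine ⟨Measure.map κ m', range κ, inferInstance, Measure.InnerRegular.map_of_continuous hκc, hK,
    hK0, fun u => ?_⟩
  obtain ⟨C, hC⟩ := hK.exists_bound_of_continuousOn u.continuous.continuousOn
  obtain ⟨n, hn⟩ := RR_cutoff ψ hψ |u|
  obtain ⟨k, hk⟩ := exists_nat_ge C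
  let N : ℝ := max n k
  have hN0 : 0 ≤ N := le_max_of_le_left (Nat.cast_nonneg n)
  have hNN : -N ≤ N := by linarith
  have hcl : Continuous fun x => projIcc (-N) N hNN (u x) := continuous_projIcc.comp u.continuous
  let g : C(StoneCech X, ℝ) := ⟨fun y => ((stoneCechExtend hcl y : Icc (-N) N) : ℝ),
    continuous_subtype_val.comp (continuous_stoneCechExtend hcl)⟩
  have hg : ∀ x, g (j x) = projIcc (-N) N hNN (u x) := fun x =>
    congrArg Subtype.val (stoneCechExtend_stoneCechUnit hcl x)
  have hgu : ∀ x, |u x| ≤ N → g (j x) = u x := fun x hx => by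
    rw [hg, projIcc_of_mem hNN (abs_le.1 hx)]
  have hz : ψ |u - g.comp j| = 0 := by
    refine hn _ (abs_nonneg _) fun x hx => ?_
    have hx' : |u x| ≤ n := hx
    have := hgu x (hx'.trans (le_max_left _ _))
    simp [this]
  have h1 : ψ u = ψ (g.comp j) := by
    have e1 := hψ _ (sub_nonneg.2 (le_abs_self (u - g.comp j)))
    have e2 := hψ _ (sub_nonneg.2 (show -|u - g.comp j| ≤ u - g.comp j from fun x => neg_abs_le ((u - g.comp j) x)))
    rw [map_sub, hz, map_sub] at e1
    rw [map_sub, map_neg, hz, map_sub] at e2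
    linarith
  rw [h1, hbdd]
  refine integral_congr_ae ?_
  have : ∀ᵐ x ∂(Measure.map κ m'), x ∈ range κ := hK0
  filter_upwards [this] with x hx
  exact hgu x ((hC x hx).trans (hk.trans (le_max_right _ _)))

theorem RR_surj {X : Type u} [TopologicalSpace X] [MeasurableSpace X] [BorelSpace X]
    [T35Space X] (hX : Realcompact X) (φ : C(X, ℝ) →ₗ[ℝ] ℝ) (h : IsOrderBdd C(X, ℝ) φ) :
    ∃ μ : SignedMeasure X, McMem μ ∧ phiFun μ = ⇑φ := by
  obtain ⟨ψ₁, ψ₂, h1, h2, rfl⟩ := RR_decomp φ h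
  obtain ⟨a, K, ha, har, hK, haK, hai⟩ := RR_exists_pos hX ψ₁ h1
  obtain ⟨b, L, hb, hbr, hL, hbL, hbi⟩ := RR_exists_pos hX ψ₂ h2
  refine ⟨a.toSignedMeasure - b.toSignedMeasure, RR_mcMem a b (hK.union hL)
    (measure_mono_null (compl_subset_compl.2 subset_union_left) haK)
    (measure_mono_null (compl_subset_compl.2 subset_union_right) hbL), ?_⟩
  funext u
  rw [RR_phi a b u (RR_integrable_of_compact a hK haK u) (RR_integrable_of_compact b hL hbL u),
    LinearMap.sub_apply, hai, hbi]

end existence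

end RRaux

/-- Riesz representation for realcompact spaces.  For realcompact `X`,
every `u ∈ C(X)` is `|μ|`-integrable for every `μ ∈ M_c(X)`, and `μ ↦ φ_μ` is a linear
bijection of `M_c(X)` onto the order dual `C(X)~` which is positive together with its
inverse, i.e. a lattice isomorphism. -/
theorem riesz_representation_realcompact {X : Type u} [TopologicalSpace X]
    [MeasurableSpace X] [BorelSpace X] (hX : Realcompact X) :
    (∀ μ : SignedMeasure X, McMem μ →
      ∀ u : C(X, ℝ), Integrable (fun x => u x) μ.totalVariation) ∧
    (∀ μ : SignedMeasure X, McMem μ →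
      ∃ φ : C(X, ℝ) →ₗ[ℝ] ℝ, ⇑φ = phiFun μ ∧ IsOrderBdd C(X, ℝ) φ) ∧
    (∀ μ ν : SignedMeasure X, McMem μ → McMem ν →
      ∀ u : C(X, ℝ), phiFun (μ + ν) u = phiFun μ u + phiFun ν u) ∧
    (∀ (c : ℝ) (μ : SignedMeasure X), McMem μ →
      ∀ u : C(X, ℝ), phiFun (c • μ) u = c * phiFun μ u) ∧
    (∀ μ ν : SignedMeasure X, McMem μ → McMem ν → phiFun μ = phiFun ν → μ = ν) ∧
    (∀ φ : C(X, ℝ) →ₗ[ℝ] ℝ, IsOrderBdd C(X, ℝ) φ →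
      ∃ μ : SignedMeasure X, McMem μ ∧ phiFun μ = ⇑φ) ∧
    (∀ μ : SignedMeasure X, McMem μ →
      (0 ≤ μ ↔ ∀ u : C(X, ℝ), 0 ≤ u → 0 ≤ phiFun μ u)) := by
  obtain ⟨ι, s, hs, ⟨e⟩⟩ := id hX
  have : T35Space X := (Topology.IsEmbedding.subtypeVal.comp e.isEmbedding).t35Space
  refine ⟨fun μ hμ u => RR_integrable μ hμ u, fun μ hμ => RR_phi_linear μ hμ,
    fun μ ν hμ hν u => RR_add μ ν hμ hν u, fun c μ _ u => RR_smul c μ u,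
    fun μ ν hμ hν h => RR_inj μ ν hμ hν h, fun φ h => RR_surj hX φ h,
    fun μ hμ => ⟨fun h u hu => ?_, fun h => RR_pos μ hμ h⟩⟩
  unfold phiFun
  rw [RR_neg_nonneg μ h, integral_zero_measure, sub_zero]
  exact integral_nonneg fun x => hu x
end

section
/- Let X be a topological space and K ⊆ X compact, and let T : M(K) → M_c(X) be the map μ ↦ μ^{(K,X)} where μ^{(K,X)}(B) := μ(B ∩ K). Then T[M(K)] = {ν ∈ M_c(X) : S_ν ⊆ K}, and this set is a band in M_c(X). -/
open MeasureTheory Function Topology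
open scoped ENNReal

/-- The extension map `T : M(K) → M_c(X)`, `μ ↦ μ^{(K,X)}` with
`μ^{(K,X)}(B) = μ(B ∩ K)`; it is implemented as the pushforward of `μ` under the
inclusion `K → X`. -/
noncomputable def extMeas {X : Type u} [TopologicalSpace X] [MeasurableSpace X]
    (K : Set X) (μ : SignedMeasure K) : SignedMeasure X :=
  μ.map (Subtype.val : K → X)

theorem isRadon_iff_innerRegular {X : Type*} [TopologicalSpace X] [MeasurableSpace X]
    (μ : SignedMeasure X) : IsRadon μ ↔ μ.totalVariation.InnerRegular := by
  constructor
  · intro h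
    refine ⟨fun U hU r hr => ?_⟩
    rw [h U hU] at hr
    simpa only [lt_iSup_iff, exists_prop] using hr
  · intro h B hB
    exact h.innerRegular.measure_eq_iSup hB

theorem innerRegular_of_le {X : Type*} [TopologicalSpace X] [T2Space X] [MeasurableSpace X]
    [BorelSpace X] {μ ν : Measure X} [IsFiniteMeasure μ] [ν.InnerRegular] [IsFiniteMeasure ν]
    (h : μ ≤ ν) : μ.InnerRegular := by
  refine ⟨fun U hU r hr => ?_⟩
  obtain ⟨C, hCU, hC, hlt⟩ := hU.exists_isCompact_sdiff_lt (μ := ν) (measure_ne_top _ _)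
    (ε := μ U - r) (tsub_pos_of_lt hr).ne'
  refine ⟨C, hCU, hC, ?_⟩
  have h1 : μ U ≤ μ C + μ (U \ C) := by
    rw [← measure_union_add_inter C (hU.diff hC.measurableSet)]
    simp [Set.union_eq_self_of_subset_left hCU]
  have h2 : μ (U \ C) < μ U - r := (h _).trans_lt hlt
  by_contra hcon
  push Not at hcon
  have h3 : μ U < μ U := calc
    μ U ≤ μ C + μ (U \ C) := h1
    _ ≤ r + μ (U \ C) := by gcongr
    _ < r + (μ U - r) := ENNReal.add_lt_add_left hr.ne_top h2
    _ = μ U := add_tsub_cancel_of_le hr.le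
  exact lt_irrefl _ h3

theorem isClosed_msupport {X : Type*} [TopologicalSpace X] [MeasurableSpace X]
    (μ : SignedMeasure X) : IsClosed (msupport μ) := by
  rw [← isOpen_compl_iff, isOpen_iff_forall_mem_open]
  intro x hx
  simp only [msupport, Set.mem_compl_iff, Set.mem_ofPred_eq, not_forall] at hx
  obtain ⟨U, hU, hxU, h0⟩ := hx
  exact ⟨U, fun y hy hy' => h0 (hy' U hU hy), hU, hxU⟩

theorem mem_iff {X : Type*} [TopologicalSpace X] [T2Space X] [MeasurableSpace X]
    [BorelSpace X] {K : Set X} (hK : IsCompact K) (ν : SignedMeasure X) :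
    (McMem ν ∧ msupport ν ⊆ K) ↔
      ν.totalVariation.InnerRegular ∧ ν.totalVariation Kᶜ = 0 := by
  constructor
  · rintro ⟨⟨h1, -⟩, h3⟩
    refine ⟨(isRadon_iff_innerRegular ν).1 h1, ?_⟩
    rw [h1 _ hK.measurableSet.compl]
    simp only [ENNReal.iSup_eq_zero]
    intro C hC hCc
    refine hCc.measure_zero_of_nhdsWithin fun a ha => ?_
    have : a ∉ msupport ν := fun h => hC ha (h3 h)
    simp only [msupport, Set.mem_ofPred_eq, not_forall, not_lt, nonpos_iff_eq_zero] at this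
    obtain ⟨U, hU, haU, h0⟩ := this
    exact ⟨U, mem_nhdsWithin_of_mem_nhds (hU.mem_nhds haU), h0⟩
  · rintro ⟨h1, h2⟩
    have hs : msupport ν ⊆ K := by
      intro x hx
      by_contra hxK
      exact (hx _ hK.isClosed.isOpen_compl hxK).ne' h2
    exact ⟨⟨(isRadon_iff_innerRegular ν).2 h1,
      hK.of_isClosed_subset (isClosed_msupport ν) hs⟩, hs⟩

theorem apply_inter {X : Type*} [MeasurableSpace X] {K : Set X} (hK : MeasurableSet K)
    {ν : SignedMeasure X} (h : ν.totalVariation Kᶜ = 0) {B : Set X} (hB : MeasurableSet B) :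
    ν (B ∩ K) = ν B := by
  have h1 : ν (B \ K) = 0 := by
    apply SignedMeasure.null_of_totalVariation_zero
    exact measure_mono_null (fun x hx => hx.2) h
  have h2 := VectorMeasure.of_add_of_sdiff (v := ν) (hB.inter hK) hB Set.inter_subset_left
  rw [Set.sdiff_self_inter, h1, add_zero] at h2
  exact h2

theorem mem_of_le {X : Type*} [TopologicalSpace X] [T2Space X] [MeasurableSpace X]
    [BorelSpace X] {K : Set X} {ν : SignedMeasure X} {μ : Measure X} [IsFiniteMeasure μ]
    (h : ν.totalVariation ≤ μ) (h1 : μ.InnerRegular) (h2 : μ Kᶜ = 0) :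
    ν.totalVariation.InnerRegular ∧ ν.totalVariation Kᶜ = 0 :=
  ⟨innerRegular_of_le h, le_antisymm ((h _).trans h2.le) zero_le⟩

theorem image_eq {X : Type*} [TopologicalSpace X] [T2Space X]
    [MeasurableSpace X] [BorelSpace X] (K : Set X) (hK : IsCompact K) :
    extMeas K '' {μ : SignedMeasure K | IsRadon μ} =
      {ν : SignedMeasure X | McMem ν ∧ msupport ν ⊆ K} := by
  have hemb : MeasurableEmbedding (Subtype.val : K → X) :=
    MeasurableEmbedding.subtype_coe hK.measurableSet
  have hvar : ∀ μ : SignedMeasure K,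
      (extMeas K μ).totalVariation = μ.totalVariation.map Subtype.val := by
    intro μ
    rw [SignedMeasure.totalVariation_eq_variation, SignedMeasure.totalVariation_eq_variation]
    exact hemb.variation_map
  ext ν
  simp only [Set.mem_image, Set.mem_ofPred_eq, mem_iff hK]
  constructor
  · rintro ⟨μ, hμ, rfl⟩
    rw [isRadon_iff_innerRegular] at hμ
    rw [hvar]
    refine ⟨Measure.InnerRegular.map_of_continuous continuous_subtype_val, ?_⟩
    rw [hemb.map_apply]
    simp
  · rintro ⟨h1, h2⟩
    let p := ν.toJordanDecomposition.posPart.comap (Subtype.val : K → X)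
    let n := ν.toJordanDecomposition.negPart.comap (Subtype.val : K → X)
    have heq : extMeas K (p.toSignedMeasure - n.toSignedMeasure) = ν := by
      ext B hB
      rw [extMeas, VectorMeasure.map_apply _ hemb.measurable hB,
        Measure.toSignedMeasure_sub_apply (hemb.measurable hB),
        ← apply_inter hK.measurableSet h2 hB,
        ν.apply_eq_posPart_real_sub_negPart_real (hB.inter hK.measurableSet)]
      simp only [p, n, Measure.real, hemb.comap_apply, Subtype.image_preimage_coe]
      rw [Set.inter_comm]
    refine ⟨p.toSignedMeasure - n.toSignedMeasure, ?_, heq⟩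
    rw [isRadon_iff_innerRegular]
    have h3 : (p.toSignedMeasure - n.toSignedMeasure).totalVariation
        = ν.totalVariation.comap (Subtype.val : K → X) := by
      rw [← hemb.comap_map (p.toSignedMeasure - n.toSignedMeasure).totalVariation, ← hvar, heq]
    rw [h3]
    exact ⟨h1.innerRegular.comap hemb (fun _ hU => hemb.measurableSet_image' hU)
      (fun _ hr hC => IsEmbedding.subtypeVal.isInducing.isCompact_preimage' hC hr)⟩

/-- For compact `K ⊆ X` the range of `T = extMeas K` on `M(K)` is
`{ν ∈ M_c(X) : S_ν ⊆ K}`, and this set is a band in `M_c(X)`. -/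
theorem range_extension_map_band {X : Type u} [TopologicalSpace X] [T2Space X]
    [MeasurableSpace X] [BorelSpace X] (K : Set X) (hK : IsCompact K) :
    (extMeas K '' {μ : SignedMeasure K | IsRadon μ} =
      {ν : SignedMeasure X | McMem ν ∧ msupport ν ⊆ K}) ∧
    -- the set S = {ν ∈ M_c(X) : S_ν ⊆ K} is a band in M_c(X):
    -- (a) it is a linear subspace,
    (∀ ν ρ : SignedMeasure X, (McMem ν ∧ msupport ν ⊆ K) → (McMem ρ ∧ msupport ρ ⊆ K) →
      McMem (ν + ρ) ∧ msupport (ν + ρ) ⊆ K) ∧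
    (∀ (c : ℝ) (ν : SignedMeasure X), (McMem ν ∧ msupport ν ⊆ K) →
      McMem (c • ν) ∧ msupport (c • ν) ⊆ K) ∧
    -- (b) it is an ideal: if ν ∈ M_c(X) and |ν| ≤ |ρ| with ρ ∈ S then ν ∈ S,
    (∀ ν ρ : SignedMeasure X, McMem ν → (McMem ρ ∧ msupport ρ ⊆ K) →
      (∀ B : Set X, MeasurableSet B → ν.totalVariation B ≤ ρ.totalVariation B) →
      McMem ν ∧ msupport ν ⊆ K) ∧
    -- (c) it is closed under existing suprema in M_c(X)
    (∀ D : Set (SignedMeasure X), (∀ ν ∈ D, McMem ν ∧ msupport ν ⊆ K) →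
      ∀ σ : SignedMeasure X, McMem σ → (∀ ν ∈ D, ν ≤ σ) →
      (∀ τ : SignedMeasure X, McMem τ → (∀ ν ∈ D, ν ≤ τ) → σ ≤ τ) →
      McMem σ ∧ msupport σ ⊆ K) := by
  have hKm := hK.measurableSet
  refine ⟨image_eq K hK, ?_, ?_, ?_, ?_⟩
  · intro ν ρ hν hρ
    rw [mem_iff hK] at *
    obtain ⟨h1, h2⟩ := hν
    obtain ⟨h3, h4⟩ := hρ
    refine mem_of_le (μ := ν.totalVariation + ρ.totalVariation) ?_ inferInstance (by simp [h2, h4])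
    simp only [SignedMeasure.totalVariation_eq_variation]
    exact VectorMeasure.variation_add_le
  · intro c ν hν
    rw [mem_iff hK] at *
    obtain ⟨h1, h2⟩ := hν
    refine mem_of_le (μ := ‖c‖₊ • ν.totalVariation) ?_ inferInstance (by simp [h2])
    simp only [SignedMeasure.totalVariation_eq_variation]
    exact VectorMeasure.variation_smul.le
  · intro ν ρ hν hρ hle
    rw [mem_iff hK] at *
    obtain ⟨h1, h2⟩ := hρ
    exact mem_of_le (Measure.le_iff.2 hle) h1 h2
  · intro D hD σ hσ hub hlub
    have hσr : σ.totalVariation.InnerRegular := (isRadon_iff_innerRegular σ).1 hσ.1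
    have hres : McMem (σ.restrict K) ∧ msupport (σ.restrict K) ⊆ K := by
      rw [mem_iff hK]
      have hv : SignedMeasure.totalVariation (σ.restrict K) = σ.totalVariation.restrict K := by
        simp only [SignedMeasure.totalVariation_eq_variation]
        exact VectorMeasure.variation_restrict hKm
      refine ⟨innerRegular_of_le (ν := σ.totalVariation) ?_, ?_⟩
      · rw [hv]; exact Measure.restrict_le_self
      · rw [hv, Measure.restrict_apply hKm.compl]; simp
    have hle : σ ≤ σ.restrict K := by
      refine hlub _ hres.1 fun ν hν => ?_
      have hν' := (mem_iff hK ν).1 (hD ν hν)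
      intro B hB
      rw [VectorMeasure.restrict_apply _ hKm hB, ← apply_inter hKm hν'.2 hB]
      exact hub ν hν _ (hB.inter hKm)
    have hneg : ∀ B, MeasurableSet B → B ⊆ Kᶜ → σ B ≤ 0 := by
      intro B hB hBK
      have := hle B hB
      rw [VectorMeasure.restrict_apply _ hKm hB] at this
      rwa [(Set.disjoint_left.2 fun x hx hxK => hBK hx hxK : Disjoint B K).inter_eq,
        VectorMeasure.empty] at this
    have hpos : ∀ B, MeasurableSet B → B ⊆ Kᶜ → 0 ≤ σ B := by
      intro B hB hBK
      rcases D.eq_empty_or_nonempty with rfl | ⟨ν, hν⟩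
      · have hσ2 : McMem (σ + σ) := by
          have hself : McMem σ ∧ msupport σ ⊆ msupport σ := ⟨hσ, subset_rfl⟩
          have hs := (mem_iff hσ.2 σ).1 hself
          refine ((mem_iff hσ.2 (σ + σ)).2 ?_).1
          refine mem_of_le (μ := σ.totalVariation + σ.totalVariation) ?_ inferInstance
            (by simp [hs.2])
          simp only [SignedMeasure.totalVariation_eq_variation]
          exact VectorMeasure.variation_add_le
        have h := hlub (σ + σ) hσ2 (by simp) B hB
        have h' : (σ + σ) B = σ B + σ B := rfl
        change σ B ≤ (σ + σ) B at h
        linarith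
      · have hν' := (mem_iff hK ν).1 (hD ν hν)
        have h0 : ν B = 0 :=
          SignedMeasure.null_of_totalVariation_zero _ (measure_mono_null hBK hν'.2)
        rw [← h0]
        exact hub ν hν B hB
    rw [mem_iff hK]
    refine ⟨hσr, ?_⟩
    rw [SignedMeasure.totalVariation_eq_variation,
      VectorMeasure.variation_apply_eq_zero hKm.compl]
    exact fun t ht htm => le_antisymm (hneg t htm ht) (hpos t htm ht)
end
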